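/- arXiv:2308.02709 — 2 statements merged into one kernel-verified Lean document; each statement's English description precedes it below -/
import Mathlib

section
/- For a valid hyperarc h: R_h ∩ R_W = ∅ if, and only if, there exists v ∈ {0,1}^{|N|} such that h(v_A) = v_B, v_{C(W)} = q_{C(W)}, and v_W ≠ q_W. -/
/-!
For a valid hyperarc `h`, every response in `R_h` evaluates the context `v_A` to the one full
assignment `(v_A, h(v_A))`. Membership in `R_W` is therefore the same condition for all of `R_h`,
so, `R_h` being nonempty, `R_h ∩ R_W = ∅` says exactly that `(q_A, h(q_A))` violates the
observation. Moreover, the value of `(v_A, h(v_A))` at a node depends only on the context variables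
among the ancestors of that node, so any `v = (v_A, h(v_A))` with `v_{C(W)} = q_{C(W)}` agrees on
`W` with `(q_A, h(q_A))`.
-/

open Classical

/-- A partitioned causal graph on binary variables `V_0, …, V_{n-1}`, listed in
topologically sorted order.  Indices `< a` form the index set `A` (context
variables, which have no parents and topologically precede the rest), indices
`≥ a` form the index set `B`.  `parents j` is the set of indices of `pa(V_j)`. -/
structure CausalGraph where
  n : ℕ
  a : ℕ
  a_le : a ≤ n
  parents : Fin n → Finset (Fin n)
  sorted : ∀ j i : Fin n, i ∈ parents j → i < j
  noParentsA : ∀ j : Fin n, j.val < a → parents j = ∅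

namespace CausalGraph

variable (G : CausalGraph)

/-- Indices of the `A` (context) variables. -/
abbrev AIdx := {i : Fin G.n // i.val < G.a}

/-- Indices of the `B` variables. -/
abbrev BIdx := {i : Fin G.n // G.a ≤ i.val}

/-- Assignments of binary values to the `A` variables (`{0,1}^{|A|}`). -/
abbrev AAssign := G.AIdx → Bool

/-- Assignments of binary values to the `B` variables (`{0,1}^{|B|}`). -/
abbrev BAssign := G.BIdx → Bool

/-- A family of candidate response functions, one for each node, each reading a
full assignment of all variables. -/
abbrev Resp := Fin G.n → ((Fin G.n → Bool) → Bool)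

/-- A response family is admissible when each component depends only on the
values of the parents of the corresponding node.  This encodes membership in
`R = ∏_{j∈B} F_j`, where `F_j` is the set of ALL functions from values of
`pa(V_j)` to `{0,1}`. -/
def IsResponse (r : G.Resp) : Prop :=
  ∀ j : Fin G.n, ∀ v w : Fin G.n → Bool, (∀ i ∈ G.parents j, v i = w i) → r j v = r j w

/-- The response-function set `R`. -/
def R : Set G.Resp := {r | G.IsResponse r}

/-- One step of evaluation: `A` variables read the context, `B` variables apply
their response functions to the current assignment. -/
def evalStep (r : G.Resp) (vA : G.AAssign) (v : Fin G.n → Bool) : Fin G.n → Bool :=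
  fun j => if h : j.val < G.a then vA ⟨j, h⟩ else r j v

/-- Evaluation of all variables from the context `vA` and the response family
`r`, in topological order (realized by `n`-fold iteration of `evalStep`, which
is exact since each parent index precedes its child's index). -/
def eval (r : G.Resp) (vA : G.AAssign) : Fin G.n → Bool :=
  (G.evalStep r vA)^[G.n] (fun _ => false)

/-- `F_B(v_A, r)`: the values of the `B` variables determined by `v_A` and `r`. -/
def FB (r : G.Resp) (vA : G.AAssign) : G.BAssign := fun j => G.eval r vA j.1

/-- A hyperarc `h : {0,1}^{|A|} → {0,1}^{|B|}`. -/
abbrev Hyperarc := G.AAssign → G.BAssign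

/-- `R_h`: the admissible responses consistent with hyperarc `h` on every input. -/
def Rh (h : G.Hyperarc) : Set G.Resp :=
  {r ∈ G.R | ∀ vA : G.AAssign, G.FB r vA = h vA}

/-- A hyperarc is valid when `R_h ≠ ∅`. -/
def Valid (h : G.Hyperarc) : Prop := (G.Rh h).Nonempty

/-- The set `H` of valid hyperarcs. -/
def H : Set G.Hyperarc := {h | G.Valid h}

/-- `R_{v_B.v_A}`: responses mapping the context `v_A` to the values `v_B` of `V_B`. -/
def RvBvA (vA : G.AAssign) (vB : G.BAssign) : Set G.Resp :=
  {r ∈ G.R | G.FB r vA = vB}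

/-- Restriction of a full assignment to the `A` variables. -/
def restrictA (v : Fin G.n → Bool) : G.AAssign := fun i => v i.1

/-- Restriction of a full assignment to the `B` variables. -/
def restrictB (v : Fin G.n → Bool) : G.BAssign := fun j => v j.1

/-- The full assignment determined by a context `vA` and a hyperarc `h`. -/
def extendA (h : G.Hyperarc) (vA : G.AAssign) : Fin G.n → Bool :=
  fun i => if hi : i.val < G.a then vA ⟨i, hi⟩ else h vA ⟨i, not_lt.mp hi⟩

/-- One step of evaluation under the intervention `do(V_I = q_I)`: the
mechanisms of the intervened variables are ignored. -/
def evalDoStep (I : Finset (Fin G.n)) (qI : Fin G.n → Bool) (r : G.Resp)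
    (qA : G.AAssign) (v : Fin G.n → Bool) : Fin G.n → Bool :=
  fun j => if h : j.val < G.a then qA ⟨j, h⟩ else if j ∈ I then qI j else r j v

/-- Evaluation of all variables under the intervention `do(V_I = q_I)`,
in context `V_A = q_A`, using the response family `r`. -/
def evalDo (I : Finset (Fin G.n)) (qI : Fin G.n → Bool) (r : G.Resp)
    (qA : G.AAssign) : Fin G.n → Bool :=
  (G.evalDoStep I qI r qA)^[G.n] (fun _ => false)

/-- A causal query `P(V_O(V_I = q_I) = q_O | V_A = q_A)`: disjoint sets
`O, I ⊆ B` together with the values `q_A`, `q_I`, `q_O`. -/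
structure Query (G : CausalGraph) where
  O : Finset (Fin G.n)
  I : Finset (Fin G.n)
  O_sub : ∀ j ∈ O, G.a ≤ j.val
  I_sub : ∀ j ∈ I, G.a ≤ j.val
  disjOI : Disjoint O I
  qA : G.AAssign
  qI : Fin G.n → Bool
  qO : Fin G.n → Bool

/-- `R_Q`: the admissible responses consistent with the query, i.e. those with
`F_O((q_A, q_I), r) = q_O`. -/
def RQ (Q : G.Query) : Set G.Resp :=
  {r ∈ G.R | ∀ j ∈ Q.O, G.evalDo Q.I Q.qI r Q.qA j = Q.qO j}

/-- Edges of the mutilated graph `G^{do(V_I = q_I)}` (all edges into `V_I` deleted). -/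
def doEdge (I : Finset (Fin G.n)) (i j : Fin G.n) : Prop := j ∉ I ∧ i ∈ G.parents j

/-- `C(Q)`: the critical variables for the query, i.e. those with a directed
path to some variable of `V_O` in the mutilated graph `G^{do(V_I = q_I)}`. -/
def critical (Q : G.Query) : Set (Fin G.n) :=
  {i | ∃ o ∈ Q.O, Relation.ReflTransGen (G.doEdge Q.I) i o}

/-- An observation `{V_W = q_W}` with `W ⊆ B`, in context `V_A = q_A`. -/
structure Obs (G : CausalGraph) where
  W : Finset (Fin G.n)
  W_sub : ∀ j ∈ W, G.a ≤ j.val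
  qA : G.AAssign
  qW : Fin G.n → Bool

/-- `R_W`: the admissible responses consistent with the observation, i.e. those
with `F_W(q_A, r) = q_W`. -/
def RW (Ob : G.Obs) : Set G.Resp :=
  {r ∈ G.R | ∀ j ∈ Ob.W, G.eval r Ob.qA j = Ob.qW j}

/-- Edges of the causal graph `G` itself. -/
def edge (i j : Fin G.n) : Prop := i ∈ G.parents j

/-- `C(W)`: the critical variables for the observation: the `A`-variables with
a directed path in `G` to some variable of `V_W`. -/
def criticalW (Ob : G.Obs) : Set (Fin G.n) :=
  {i | i.val < G.a ∧ ∃ w ∈ Ob.W, Relation.ReflTransGen G.edge i w}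

end CausalGraph

open CausalGraph

/-- The sum `Σ_{x ∈ s} f x` of `f` over a subset `s` of a finite type. -/
noncomputable def setSum {α : Type*} [Fintype α] (s : Set α) (f : α → ℝ) : ℝ :=
  ∑ x : α, if x ∈ s then f x else 0

namespace CausalGraph

variable {G : CausalGraph} {h : G.Hyperarc} {r : G.Resp}

theorem iterate_evalStep_congr (hr : r ∈ G.R) {vA wA : G.AAssign} (u : Fin G.n → Bool) (k : ℕ)
    (j : Fin G.n) (hvw : ∀ i : G.AIdx, Relation.ReflTransGen G.edge i.1 j → vA i = wA i) :
    (G.evalStep r vA)^[k] u j = (G.evalStep r wA)^[k] u j := by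
  induction k generalizing j with
  | zero => rfl
  | succ k ih =>
    rw [Function.iterate_succ_apply', Function.iterate_succ_apply']
    unfold evalStep
    split_ifs with hj
    · exact hvw ⟨j, hj⟩ .refl
    · exact hr j _ _ fun p hp => ih p fun i hi => hvw i (hi.tail hp)

theorem eval_congr (hr : r ∈ G.R) {vA wA : G.AAssign} {j : Fin G.n}
    (hvw : ∀ i : G.AIdx, Relation.ReflTransGen G.edge i.1 j → vA i = wA i) :
    G.eval r vA j = G.eval r wA j :=
  iterate_evalStep_congr hr _ _ j hvw

theorem restrictA_iterate_evalStep (r : G.Resp) (vA : G.AAssign) (u : Fin G.n → Bool) {k : ℕ}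
    (hk : k ≠ 0) : G.restrictA ((G.evalStep r vA)^[k] u) = vA := by
  obtain ⟨m, rfl⟩ := Nat.exists_eq_succ_of_ne_zero hk
  rw [Function.iterate_succ_apply']
  exact funext fun i => dif_pos i.2

theorem restrictA_eval (r : G.Resp) (vA : G.AAssign) : G.restrictA (G.eval r vA) = vA :=
  funext fun i => congrFun (restrictA_iterate_evalStep r vA _ i.1.pos.ne') i

theorem eq_of_restrict_eq {v w : Fin G.n → Bool} (hA : G.restrictA v = G.restrictA w)
    (hB : G.restrictB v = G.restrictB w) : v = w := by
  funext j
  rcases lt_or_ge j.val G.a with hj | hj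
  · exact congrFun hA ⟨j, hj⟩
  · exact congrFun hB ⟨j, hj⟩

theorem restrictA_extendA (h : G.Hyperarc) (vA : G.AAssign) :
    G.restrictA (G.extendA h vA) = vA :=
  funext fun i => dif_pos i.2

theorem restrictB_extendA (h : G.Hyperarc) (vA : G.AAssign) :
    G.restrictB (G.extendA h vA) = h vA :=
  funext fun j => dif_neg (not_lt.mpr j.2)

theorem extendA_restrictA {v : Fin G.n → Bool} (hv : h (G.restrictA v) = G.restrictB v) :
    G.extendA h (G.restrictA v) = v :=
  eq_of_restrict_eq (restrictA_extendA h _) ((restrictB_extendA h _).trans hv)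

theorem eval_eq_extendA (hr : r ∈ G.Rh h) (vA : G.AAssign) : G.eval r vA = G.extendA h vA :=
  eq_of_restrict_eq ((restrictA_eval r vA).trans (restrictA_extendA h vA).symm)
    ((hr.2 vA).trans (restrictB_extendA h vA).symm)

theorem mem_RW_iff_of_mem_Rh (hr : r ∈ G.Rh h) (Ob : G.Obs) :
    r ∈ G.RW Ob ↔ ∀ j ∈ Ob.W, G.extendA h Ob.qA j = Ob.qW j := by
  rw [← eval_eq_extendA hr]
  exact and_iff_right hr.1

theorem Valid.Rh_inter_RW_eq_empty_iff (hh : G.Valid h) (Ob : G.Obs) :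
    G.Rh h ∩ G.RW Ob = ∅ ↔ ∃ j ∈ Ob.W, G.extendA h Ob.qA j ≠ Ob.qW j := by
  constructor
  · intro hdisj
    obtain ⟨r, hr⟩ := hh
    have hrW : r ∉ G.RW Ob := fun hrW => Set.eq_empty_iff_forall_notMem.mp hdisj r ⟨hr, hrW⟩
    simpa only [mem_RW_iff_of_mem_Rh hr, not_forall, exists_prop] using hrW
  · rintro ⟨j, hj, hne⟩
    exact Set.eq_empty_iff_forall_notMem.mpr fun r ⟨hr, hrW⟩ =>
      hne ((mem_RW_iff_of_mem_Rh hr Ob).mp hrW j hj)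

theorem Valid.extendA_congr (hh : G.Valid h) {vA wA : G.AAssign} {j : Fin G.n}
    (hvw : ∀ i : G.AIdx, Relation.ReflTransGen G.edge i.1 j → vA i = wA i) :
    G.extendA h vA j = G.extendA h wA j := by
  obtain ⟨r, hr⟩ := hh
  rw [← eval_eq_extendA hr, ← eval_eq_extendA hr]
  exact eval_congr hr.1 hvw

theorem Valid.eq_extendA_of_eq_on_criticalW (hh : G.Valid h) {Ob : G.Obs} {v : Fin G.n → Bool}
    (hv : h (G.restrictA v) = G.restrictB v)
    (hC : ∀ i : G.AIdx, i.1 ∈ G.criticalW Ob → v i.1 = Ob.qA i) {j : Fin G.n} (hj : j ∈ Ob.W) :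
    v j = G.extendA h Ob.qA j :=
  calc v j = G.extendA h (G.restrictA v) j := by rw [extendA_restrictA hv]
    _ = G.extendA h Ob.qA j := hh.extendA_congr fun i hi => hC i ⟨i.2, j, hj, hi⟩

end CausalGraph

/-- for a valid hyperarc `h`: `R_h ∩ R_W = ∅` iff there exists
`v ∈ {0,1}^{|N|}` with `h(v_A) = v_B`, `v_{C(W)} = q_{C(W)}`, and `v_W ≠ q_W`. -/
theorem Rh_disjoint_RW_iff (G : CausalGraph) (Ob : G.Obs)
    (h : G.Hyperarc) (hh : G.Valid h) :
    G.Rh h ∩ G.RW Ob = ∅ ↔ ∃ v : Fin G.n → Bool,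
      h (G.restrictA v) = G.restrictB v ∧
      (∀ i : G.AIdx, i.1 ∈ G.criticalW Ob → v i.1 = Ob.qA i) ∧
      (∃ j ∈ Ob.W, v j ≠ Ob.qW j) := by
  rw [hh.Rh_inter_RW_eq_empty_iff]
  constructor
  · intro hW
    refine ⟨G.extendA h Ob.qA, ?_, fun i _ => congrFun (restrictA_extendA h Ob.qA) i, hW⟩
    rw [restrictA_extendA, restrictB_extendA]
  · rintro ⟨v, hv, hC, j, hj, hne⟩
    exact ⟨j, hj, hh.eq_extendA_of_eq_on_criticalW hv hC hj ▸ hne⟩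
end

section
/- (Equivalence of the fractional lower-bound program and its pruned linear reformulation) Suppose the feasible set F = { q: R → ℝ_{≥0} : Σ_{r ∈ R_{v_B.v_A}} q_r = p_{v_B.v_A} for all (v_A, v_B), and Σ_{r ∈ R_W} q_r > 0 } is nonempty. Then inf over q ∈ F of the ratio (Σ_{r ∈ R_Q ∩ R_W} q_r)/(Σ_{r ∈ R_W} q_r) equals the optimal value of the pruned LP: min{ Σ_{h ∈ H} d_h^L q_h : Σ_{h ∈ H: h(v_A)=v_B} q_h = α·p_{v_B.v_A} for all (v_A, v_B), Σ_{h ∈ H: R_h ⊆ R_W} q_h = 1, α ≥ 0, q ≥ 0 }, where d_h^L = 1{R_h ⊆ R_Q}·1{R_h ⊆ R_W}. -/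
open Classical

open CausalGraph

/-!
Dividing a weight by the mass of the conditioning event (the Charnes–Cooper substitution) turns the
fractional program into a linear one over responses. The constraints and the observation see a
response `r` only through its hyperarc `F_B(·, r)`, so weights can be moved along maps between
responses and hyperarcs. Pushing forward along `r ↦ F_B(·, r)` preserves feasibility and can only
decrease the objective, since the pruned program counts a hyperarc only when all its responses
belong to the event. Conversely, placing the weight of each hyperarc on a single response, chosen
outside the event whenever the hyperarc has such a response, preserves the objective exactly.
-/

section SetSum

variable {α β : Type*} [Fintype α] [Fintype β]

theorem setSum_eq_sum_filter (s : Set α) (f : α → ℝ) : setSum s f = ∑ x with x ∈ s, f x :=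
  (Finset.sum_filter _ _).symm

theorem setSum_nonneg (s : Set α) {f : α → ℝ} (hf : ∀ x, 0 ≤ f x) : 0 ≤ setSum s f := by
  rw [setSum_eq_sum_filter]
  exact Finset.sum_nonneg fun x _ => hf x

theorem setSum_mono {s t : Set α} {f : α → ℝ} (hf : ∀ x, 0 ≤ f x) (hst : s ⊆ t) :
    setSum s f ≤ setSum t f := by
  rw [setSum_eq_sum_filter, setSum_eq_sum_filter]
  exact Finset.sum_le_sum_of_subset_of_nonneg
    (Finset.monotone_filter_right _ fun _ _ hx => hst hx) fun x _ _ => hf x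

theorem le_setSum {s : Set α} {f : α → ℝ} (hf : ∀ x, 0 ≤ f x) {x : α} (hx : x ∈ s) :
    f x ≤ setSum s f := by
  rw [setSum_eq_sum_filter]
  exact Finset.single_le_sum (fun y _ => hf y) (Finset.mem_filter_univ x |>.2 hx)

theorem exists_mem_ne_zero_of_setSum_ne_zero {s : Set α} {f : α → ℝ} (h : setSum s f ≠ 0) :
    ∃ x ∈ s, f x ≠ 0 := by
  rw [setSum_eq_sum_filter] at h
  simpa using Finset.exists_ne_zero_of_sum_ne_zero h

theorem setSum_smul (s : Set α) (c : ℝ) (f : α → ℝ) : setSum s (c • f) = c * setSum s f := by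
  simp only [setSum_eq_sum_filter, Pi.smul_apply, smul_eq_mul, Finset.mul_sum]

/-- The pushforward along `f` of the restriction to `S` of the weight `q`. The restriction
is built in because `FB` is only meaningful on admissible responses, and a choice of response only
on valid hyperarcs. -/
noncomputable def pushforwardOn (S : Set α) (f : α → β) (q : α → ℝ) (b : β) : ℝ :=
  setSum {a ∈ S | f a = b} q

theorem setSum_pushforwardOn (S : Set α) (f : α → β) (q : α → ℝ) (T : Set β) :
    setSum T (pushforwardOn S f q) = setSum {a ∈ S | f a ∈ T} q := by
  simpa only [pushforwardOn, setSum_eq_sum_filter, Finset.filter_filter, Finset.mem_filter_univ,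
    Set.mem_ofPred_eq]
    using Finset.sum_fiberwise_eq_sum_filter {a | a ∈ S} {b | b ∈ T} f q

end SetSum

section Programs

variable {ι α β : Type*} [Fintype α] [Fintype β]

/-- Feasibility for the fractional program: `q` is a nonnegative weight with prescribed mass `p i`
on each set `C i`, and the conditioning event `W` has positive mass. -/
def IsFractionalFeasible (C : ι → Set α) (p : ι → ℝ) (W : Set α) (q : α → ℝ) : Prop :=
  (∀ a, 0 ≤ q a) ∧ (∀ i, setSum (C i) q = p i) ∧ 0 < setSum W q

/-- The objective values of the fractional program: the masses of `E` relative to `W`. No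
intersection is built in, so conditioning an event on `W` means passing its intersection with `W`
as `E`. -/
def fractionalValues (C : ι → Set α) (p : ι → ℝ) (W E : Set α) : Set ℝ :=
  {y | ∃ q, IsFractionalFeasible C p W q ∧ y = setSum E q / setSum W q}

/-- Feasibility for the Charnes–Cooper linearization of the fractional program: the mass of `W` is
normalized to one and the prescribed masses are known up to the common factor `t`. -/
def IsLinearFeasible (C : ι → Set α) (p : ι → ℝ) (W : Set α) (q : α → ℝ) (t : ℝ) : Prop :=
  0 ≤ t ∧ (∀ a, 0 ≤ q a) ∧ (∀ i, setSum (C i) q = t * p i) ∧ setSum W q = 1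

/-- The objective values of the Charnes–Cooper linearization. -/
def linearValues (C : ι → Set α) (p : ι → ℝ) (W E : Set α) : Set ℝ :=
  {y | ∃ q t, IsLinearFeasible C p W q t ∧ y = setSum E q}

variable {C : ι → Set α} {p : ι → ℝ} {W E : Set α} {q : α → ℝ} {t : ℝ}

theorem IsLinearFeasible.scale_pos (h : IsLinearFeasible C p W q t) (hcover : W ⊆ ⋃ i, C i) :
    0 < t := by
  obtain ⟨ht, hq, hmarg, htotal⟩ := h
  refine ht.lt_of_ne' ?_
  rintro rfl
  obtain ⟨a, haW, ha⟩ := exists_mem_ne_zero_of_setSum_ne_zero (htotal.trans_ne one_ne_zero)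
  obtain ⟨i, hai⟩ := Set.mem_iUnion.1 (hcover haW)
  have hle : q a ≤ 0 := by simpa only [hmarg i, zero_mul] using le_setSum hq hai
  exact ha (hle.antisymm (hq a))

theorem IsFractionalFeasible.normalize (h : IsFractionalFeasible C p W q) :
    IsLinearFeasible C p W ((setSum W q)⁻¹ • q) (setSum W q)⁻¹ := by
  obtain ⟨hq, hmarg, hpos⟩ := h
  have hinv : 0 ≤ (setSum W q)⁻¹ := inv_nonneg.2 hpos.le
  exact ⟨hinv, fun a => mul_nonneg hinv (hq a), fun i => by rw [setSum_smul, hmarg],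
    by rw [setSum_smul, inv_mul_cancel₀ hpos.ne']⟩

theorem IsLinearFeasible.unnormalize (h : IsLinearFeasible C p W q t) (ht : 0 < t) :
    IsFractionalFeasible C p W (t⁻¹ • q) := by
  obtain ⟨-, hq, hmarg, htotal⟩ := h
  have hinv : 0 < t⁻¹ := inv_pos.2 ht
  exact ⟨fun a => mul_nonneg hinv.le (hq a),
    fun i => by rw [setSum_smul, hmarg, inv_mul_cancel_left₀ ht.ne'],
    by rwa [setSum_smul, htotal, mul_one]⟩

theorem fractionalValues_eq_linearValues (hcover : W ⊆ ⋃ i, C i) :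
    fractionalValues C p W E = linearValues C p W E := by
  ext y
  constructor
  · rintro ⟨q, hq, rfl⟩
    exact ⟨_, _, hq.normalize, by rw [setSum_smul, div_eq_inv_mul]⟩
  · rintro ⟨q, t, hq, rfl⟩
    have ht : 0 < t := hq.scale_pos hcover
    refine ⟨_, hq.unnormalize ht, ?_⟩
    rw [setSum_smul, setSum_smul, hq.2.2.2, mul_div_mul_left _ _ (inv_ne_zero ht.ne'), div_one]

theorem bddBelow_fractionalValues : BddBelow (fractionalValues C p W E) := by
  refine ⟨0, ?_⟩
  rintro y ⟨q, ⟨hq, -, hpos⟩, rfl⟩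
  exact div_nonneg (setSum_nonneg E hq) hpos.le

theorem IsLinearFeasible.pushforwardOn {D : ι → Set β} {V : Set β} {S : Set α} {f : α → β}
    (h : IsLinearFeasible C p W q t) (hC : ∀ i, {a ∈ S | f a ∈ D i} = C i)
    (hW : {a ∈ S | f a ∈ V} = W) : IsLinearFeasible D p V (pushforwardOn S f q) t := by
  obtain ⟨ht, hq, hmarg, htotal⟩ := h
  exact ⟨ht, fun b => setSum_nonneg _ hq, fun i => by rw [setSum_pushforwardOn, hC, hmarg],
    by rw [setSum_pushforwardOn, hW, htotal]⟩

end Programs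

namespace CausalGraph

variable {G : CausalGraph}

theorem mem_Rh_FB {r : G.Resp} (hr : r ∈ G.R) : r ∈ G.Rh (G.FB r) :=
  ⟨hr, fun _ => rfl⟩

theorem Rh_subset_RW_iff {Ob : G.Obs} {h : G.Hyperarc} {r : G.Resp} (hr : r ∈ G.Rh h) :
    G.Rh h ⊆ G.RW Ob ↔ r ∈ G.RW Ob := by
  refine ⟨fun hsub => hsub hr, fun hrW r' hr' => ⟨hr'.1, fun j hj => ?_⟩⟩
  have hFB : G.FB r' Ob.qA = G.FB r Ob.qA := (hr'.2 Ob.qA).trans (hr.2 Ob.qA).symm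
  exact (congrFun hFB ⟨j, Ob.W_sub j hj⟩).trans (hrW.2 j hj)

theorem RW_subset_iUnion_RvBvA (Ob : G.Obs) :
    G.RW Ob ⊆ ⋃ x, Function.uncurry G.RvBvA x := fun r hr =>
  Set.mem_iUnion.2 ⟨(Ob.qA, G.FB r Ob.qA), hr.1, rfl⟩

/-- `H_{v_B.v_A}`: the valid hyperarcs mapping the context `v_A` to `v_B`, the counterpart of
`R_{v_B.v_A}` in the pruned program. -/
def HvBvA (G : CausalGraph) (vA : G.AAssign) (vB : G.BAssign) : Set G.Hyperarc :=
  {h ∈ G.H | h vA = vB}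

/-- The valid hyperarcs all of whose responses lie in the event `X`; its indicator on
`H` is the coefficient `1{R_h ⊆ X}` of the pruned program. -/
def hyperarcsWithin (X : Set G.Resp) : Set G.Hyperarc :=
  {h ∈ G.H | G.Rh h ⊆ X}

theorem FB_mem_HvBvA_iff {r : G.Resp} (hr : r ∈ G.R) {vA : G.AAssign} {vB : G.BAssign} :
    G.FB r ∈ G.HvBvA vA vB ↔ r ∈ G.RvBvA vA vB :=
  and_congr_left' (iff_of_true ⟨r, mem_Rh_FB hr⟩ hr)

theorem FB_mem_hyperarcsWithin_iff {r : G.Resp} (hr : r ∈ G.R) {X : Set G.Resp} :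
    G.FB r ∈ hyperarcsWithin X ↔ G.Rh (G.FB r) ⊆ X :=
  and_iff_right ⟨r, mem_Rh_FB hr⟩

theorem mem_RvBvA_iff_of_mem_Rh {h : G.Hyperarc} {r : G.Resp} (hr : r ∈ G.Rh h)
    {vA : G.AAssign} {vB : G.BAssign} : r ∈ G.RvBvA vA vB ↔ h vA = vB := by
  rw [← hr.2 vA]
  exact and_iff_right hr.1

theorem isCoinitialFor_linearValues_hyperarc (p : G.AAssign × G.BAssign → ℝ) (Ob : G.Obs)
    (E : Set G.Resp) :
    IsCoinitialFor (linearValues (Function.uncurry G.RvBvA) p (G.RW Ob) E)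
      (linearValues (Function.uncurry G.HvBvA) p (hyperarcsWithin (G.RW Ob))
        (hyperarcsWithin E)) := by
  rintro y ⟨q, t, hq, rfl⟩
  have hmarg : ∀ x, {r ∈ G.R | G.FB r ∈ Function.uncurry G.HvBvA x} =
      Function.uncurry G.RvBvA x := fun x => Set.ext fun r =>
    ⟨fun hr => (FB_mem_HvBvA_iff hr.1).1 hr.2, fun hr => ⟨hr.1, (FB_mem_HvBvA_iff hr.1).2 hr⟩⟩
  have hobs : {r ∈ G.R | G.FB r ∈ hyperarcsWithin (G.RW Ob)} = G.RW Ob := Set.ext fun r =>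
    ⟨fun hr => hr.2.2 (mem_Rh_FB hr.1), fun hr => ⟨hr.1, (FB_mem_hyperarcsWithin_iff hr.1).2
      ((Rh_subset_RW_iff (mem_Rh_FB hr.1)).2 hr)⟩⟩
  refine ⟨_, ⟨_, t, hq.pushforwardOn hmarg hobs, rfl⟩, ?_⟩
  rw [setSum_pushforwardOn]
  exact setSum_mono hq.2.1 fun r hr => hr.2.2 (mem_Rh_FB hr.1)

theorem exists_response_mem_iff_Rh_subset (E : Set G.Resp) :
    ∃ s : G.Hyperarc → G.Resp, ∀ h ∈ G.H, s h ∈ G.Rh h ∧ (s h ∈ E ↔ G.Rh h ⊆ E) := by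
  have hex : ∀ h ∈ G.H, ∃ r, r ∈ G.Rh h ∧ (r ∈ E ↔ G.Rh h ⊆ E) := by
    intro h hh
    by_cases hsub : G.Rh h ⊆ E
    · obtain ⟨r, hr⟩ := hh
      exact ⟨r, hr, iff_of_true (hsub hr) hsub⟩
    · obtain ⟨r, hr, hrE⟩ := Set.not_subset.1 hsub
      exact ⟨r, hr, iff_of_false hrE hsub⟩
  choose! s hs using hex
  exact ⟨s, hs⟩

theorem linearValues_hyperarc_subset (p : G.AAssign × G.BAssign → ℝ) (Ob : G.Obs)
    (E : Set G.Resp) :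
    linearValues (Function.uncurry G.HvBvA) p (hyperarcsWithin (G.RW Ob)) (hyperarcsWithin E) ⊆
      linearValues (Function.uncurry G.RvBvA) p (G.RW Ob) E := by
  rintro y ⟨q, t, hq, rfl⟩
  obtain ⟨s, hs⟩ := exists_response_mem_iff_Rh_subset E
  have hmarg : ∀ x, {h ∈ G.H | s h ∈ Function.uncurry G.RvBvA x} =
      Function.uncurry G.HvBvA x := fun x => Set.ext fun h =>
    and_congr_right fun hh => mem_RvBvA_iff_of_mem_Rh (hs h hh).1
  have hobs : {h ∈ G.H | s h ∈ G.RW Ob} = hyperarcsWithin (G.RW Ob) := Set.ext fun h =>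
    and_congr_right fun hh => (Rh_subset_RW_iff (hs h hh).1).symm
  have hevent : {h ∈ G.H | s h ∈ E} = hyperarcsWithin E := Set.ext fun h =>
    and_congr_right fun hh => (hs h hh).2
  exact ⟨_, t, hq.pushforwardOn hmarg hobs, by rw [setSum_pushforwardOn, hevent]⟩

end CausalGraph

theorem fractional_lower_equiv_general (G : CausalGraph) (p : G.AAssign × G.BAssign → ℝ)
    (Ob : G.Obs) (E : Set G.Resp)
    (hfeas : ∃ q, IsFractionalFeasible (Function.uncurry G.RvBvA) p (G.RW Ob) q) :
    ∃ m, IsGLB (fractionalValues (Function.uncurry G.RvBvA) p (G.RW Ob) E) m ∧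
      IsGLB (linearValues (Function.uncurry G.HvBvA) p (hyperarcsWithin (G.RW Ob))
        (hyperarcsWithin E)) m := by
  obtain ⟨q, hq⟩ := hfeas
  have hne : (fractionalValues (Function.uncurry G.RvBvA) p (G.RW Ob) E).Nonempty :=
    ⟨_, q, hq, rfl⟩
  have hglb := isGLB_csInf hne bddBelow_fractionalValues
  refine ⟨_, hglb, ?_⟩
  rw [fractionalValues_eq_linearValues (RW_subset_iUnion_RvBvA Ob)] at hglb ⊢
  exact hglb.of_isCoinitialFor (linearValues_hyperarc_subset p Ob E)
    (isCoinitialFor_linearValues_hyperarc p Ob E)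

/-- Equivalence of the fractional lower-bound program and its
pruned linear reformulation: if the feasible set `F` is nonempty, then the
infimum over `q ∈ F` of `(Σ_{r∈R_Q∩R_W} q_r)/(Σ_{r∈R_W} q_r)` equals the
optimal value of the pruned LP with objective coefficients
`d_h^L = 1{R_h ⊆ R_Q}·1{R_h ⊆ R_W}`. -/
theorem fractional_lower_equiv (G : CausalGraph) (Q : G.Query) (Ob : G.Obs)
    (hqA : Ob.qA = Q.qA)
    (p : G.AAssign → G.BAssign → ℝ)
    (hp : ∀ (vA : G.AAssign) (vB : G.BAssign), 0 ≤ p vA vB)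
    (hp1 : ∀ vA : G.AAssign, ∑ vB : G.BAssign, p vA vB = 1)
    (hfeas : ∃ q : G.Resp → ℝ, (∀ r, 0 ≤ q r) ∧
      (∀ (vA : G.AAssign) (vB : G.BAssign), setSum (G.RvBvA vA vB) q = p vA vB) ∧
      0 < setSum (G.RW Ob) q) :
    sInf {y : ℝ | ∃ q : G.Resp → ℝ, (∀ r, 0 ≤ q r) ∧
        (∀ (vA : G.AAssign) (vB : G.BAssign), setSum (G.RvBvA vA vB) q = p vA vB) ∧
        0 < setSum (G.RW Ob) q ∧
        y = setSum (G.RQ Q ∩ G.RW Ob) q / setSum (G.RW Ob) q} =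
    sInf {y : ℝ | ∃ (qh : G.Hyperarc → ℝ) (α : ℝ), 0 ≤ α ∧ (∀ h, 0 ≤ qh h) ∧
        (∀ (vA : G.AAssign) (vB : G.BAssign),
          setSum {h ∈ G.H | h vA = vB} qh = α * p vA vB) ∧
        setSum {h ∈ G.H | G.Rh h ⊆ G.RW Ob} qh = 1 ∧
        y = setSum {h ∈ G.H | G.Rh h ⊆ G.RQ Q ∧ G.Rh h ⊆ G.RW Ob} qh} := by
  obtain ⟨m, hfrac, hlin⟩ := fractional_lower_equiv_general G (Function.uncurry p) Ob
    (G.RQ Q ∩ G.RW Ob)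
    (by simpa only [IsFractionalFeasible, Prod.forall, Function.uncurry_apply_pair] using hfeas)
  simpa only [fractionalValues, linearValues, IsFractionalFeasible, IsLinearFeasible,
    hyperarcsWithin, HvBvA, Set.subset_inter_iff, Prod.forall, Function.uncurry_apply_pair,
    and_assoc] using (hfrac.csInf_eq hfrac.nonempty).trans (hlin.csInf_eq hlin.nonempty).symm
end
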